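/- Let Δ ≥ 1, let 𝒢 = (V,(E_t)_{t=1}^τ) be a temporal graph with τ = LΔ for an integer L ≥ 1, and for each i ∈ [L] let ℳ_i be a family of Δ-temporal matchings of 𝒢[Δ(i−1)+1, Δi] that is i-complete for 𝒢. Define T_1[M] := |M| for M ∈ ℳ_1 and, for i > 1 and M ∈ ℳ_i, T_i[M] := max({ |M| + T_{i−1}[M'] : M' ∈ ℳ_{i−1} and M ∪ M' is a Δ-temporal matching of 𝒢 } ∪ {0}). Then for every k ∈ ℕ: there is a Δ-temporal matching of 𝒢 of size at least k if and only if max_{M ∈ ℳ_L} T_L[M] ≥ k. -/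

import Mathlib

/-- A temporal graph on vertex set `V`: a lifetime `tau` and edge sets `E t`
(undirected edges, modeled as `Sym2 V`) for each time step. Only times
`1 ≤ t ≤ tau` give rise to time edges. -/
structure TemporalGraph (V : Type*) where
  tau : ℕ
  E : ℕ → Finset (Sym2 V)

variable {V : Type*}

/-- `(e, t)` is a time edge of `G`. -/
def IsTimeEdge (G : TemporalGraph V) (et : Sym2 V × ℕ) : Prop :=
  et.1 ∈ G.E et.2 ∧ 1 ≤ et.2 ∧ et.2 ≤ G.tau

/-- Two (undirected) edges share an endpoint. -/
def ShareEndpoint (e f : Sym2 V) : Prop := ∃ v, v ∈ e ∧ v ∈ f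

/-- Two time edges are `Δ`-independent: the edges share no endpoint,
or the time labels are at least `Δ` apart. -/
def DeltaIndep (Δ : ℕ) (x y : Sym2 V × ℕ) : Prop :=
  ¬ ShareEndpoint x.1 y.1 ∨ (Δ : ℤ) ≤ |(x.2 : ℤ) - (y.2 : ℤ)|

/-- A `Δ`-temporal matching of `G`: a set of time edges of `G` that are
pairwise `Δ`-independent. -/
def IsTemporalMatching (G : TemporalGraph V) (Δ : ℕ) (M : Finset (Sym2 V × ℕ)) : Prop :=
  (∀ et ∈ M, IsTimeEdge G et) ∧ ∀ x ∈ M, ∀ y ∈ M, x ≠ y → DeltaIndep Δ x y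

/-- `M[a,b]`: the time edges of `M` with time label between `a` and `b`. -/
def restrict (M : Finset (Sym2 V × ℕ)) (a b : ℕ) : Finset (Sym2 V × ℕ) :=
  M.filter (fun et => a ≤ et.2 ∧ et.2 ≤ b)

/-- `G[a,b]`: the temporal graph on `V` whose time edges are exactly those
time edges of `G` with time label between `a` and `b`. -/
def tgSlice (G : TemporalGraph V) (a b : ℕ) : TemporalGraph V :=
  { tau := G.tau, E := fun t => if a ≤ t ∧ t ≤ b then G.E t else ∅ }

/-- `ν` suffices as a `Δ`-vertex cover bound for `G`: every `Δ` consecutive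
layers can be covered by at most `ν` vertices. -/
def IsDeltaVC (G : TemporalGraph V) (Δ ν : ℕ) : Prop :=
  ∀ i, 1 ≤ i → i ≤ G.tau - Δ + 1 →
    ∃ S : Finset V, S.card ≤ ν ∧
      ∀ t ∈ Finset.Icc i (i + Δ - 1), ∀ e ∈ G.E t, ∃ v ∈ S, v ∈ e

/-- `ν` is the `Δ`-vertex cover number of `G` (the minimum such bound). -/
def IsDeltaVCNum (G : TemporalGraph V) (Δ ν : ℕ) : Prop :=
  IsDeltaVC G Δ ν ∧ ∀ μ, IsDeltaVC G Δ μ → ν ≤ μ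

/-- The maximum size of a `Δ`-temporal matching of `G`. -/
noncomputable def maxMatchingSize (G : TemporalGraph V) (Δ : ℕ) : ℕ :=
  sSup { k | ∃ M : Finset (Sym2 V × ℕ), IsTemporalMatching G Δ M ∧ M.card = k }

/-- A family `ℳ` of sets of time edges is `d`-complete for `G` (w.r.t. `Δ`):
for every `Δ`-temporal matching `M` of `G` there is `M' ∈ ℳ` such that
`(M \ M[Δ(d-1)+1, Δd]) ∪ M'` is a `Δ`-temporal matching of `G` of size at
least `|M|`. -/
def DComplete {V : Type*} [DecidableEq V] (G : TemporalGraph V) (Δ d : ℕ)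
    (ℳ : Finset (Finset (Sym2 V × ℕ))) : Prop :=
  ∀ M : Finset (Sym2 V × ℕ), IsTemporalMatching G Δ M →
    ∃ M' ∈ ℳ,
      IsTemporalMatching G Δ ((M \ restrict M (Δ * (d - 1) + 1) (Δ * d)) ∪ M') ∧
      M.card ≤ ((M \ restrict M (Δ * (d - 1) + 1) (Δ * d)) ∪ M').card

open Classical in
/-- The dynamic-programming table: `Ttab G Δ ℳ 1 M = |M|`, and for `i > 1`,
`Ttab G Δ ℳ i M = max({|M| + Ttab G Δ ℳ (i-1) M' : M' ∈ ℳ (i-1), M ∪ M' is a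
Δ-temporal matching of G} ∪ {0})`. (The value at `i = 0` is irrelevant.) -/
noncomputable def Ttab {V : Type*} [DecidableEq V] (G : TemporalGraph V) (Δ : ℕ)
    (ℳ : ℕ → Finset (Finset (Sym2 V × ℕ))) :
    ℕ → Finset (Sym2 V × ℕ) → ℕ
  | 0, M => M.card
  | 1, M => M.card
  | (i + 2), M =>
      ((ℳ (i + 1)).filter (fun M' => IsTemporalMatching G Δ (M ∪ M'))).sup
        (fun M' => M.card + Ttab G Δ ℳ (i + 1) M')

/-!
Cut the time axis into consecutive windows of length `Δ`. Using `i`-completeness for every `i`, one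
window after the other, turns any `Δ`-temporal matching into one that is at least as large and whose
part in window `i` belongs to `ℳ i`; the parts of this matching form a chain of choices that the
table maximises over. Conversely, a chain of choices that is only checked for consecutive windows is
a `Δ`-temporal matching altogether, since time edges from non-consecutive windows are at least `Δ`
apart.
-/

section TemporalMatching

variable {G : TemporalGraph V} {Δ : ℕ} {M M' N : Finset (Sym2 V × ℕ)}

theorem DeltaIndep.symm {x y : Sym2 V × ℕ} (h : DeltaIndep Δ x y) : DeltaIndep Δ y x :=
  h.imp (fun hxy ⟨v, hy, hx⟩ => hxy ⟨v, hx, hy⟩) fun hxy => by rwa [abs_sub_comm]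

theorem deltaIndep_of_add_le {x y : Sym2 V × ℕ} (h : y.2 + Δ ≤ x.2) : DeltaIndep Δ x y :=
  Or.inr (le_abs.2 (Or.inl (by omega)))

theorem isTemporalMatching_empty : IsTemporalMatching G Δ ∅ := by
  simp [IsTemporalMatching]

theorem IsTemporalMatching.subset (hN : IsTemporalMatching G Δ N) (h : M ⊆ N) :
    IsTemporalMatching G Δ M :=
  ⟨fun x hx => hN.1 x (h hx), fun x hx y hy => hN.2 x (h hx) y (h hy)⟩

theorem isTemporalMatching_tgSlice_iff {a b : ℕ} :
    IsTemporalMatching (tgSlice G a b) Δ M ↔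
      IsTemporalMatching G Δ M ∧ ∀ x ∈ M, x.2 ∈ Finset.Icc a b := by
  have timeEdge_iff (x : Sym2 V × ℕ) :
      IsTimeEdge (tgSlice G a b) x ↔ IsTimeEdge G x ∧ x.2 ∈ Finset.Icc a b := by
    by_cases hx : a ≤ x.2 ∧ x.2 ≤ b <;> simp [IsTimeEdge, tgSlice, hx]
  simp only [IsTemporalMatching, timeEdge_iff, forall₂_and]
  tauto

theorem isTemporalMatching_tgSlice_one_of_tau_le {b : ℕ} (hb : G.tau ≤ b) :
    IsTemporalMatching (tgSlice G 1 b) Δ M ↔ IsTemporalMatching G Δ M :=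
  isTemporalMatching_tgSlice_iff.trans <| and_iff_left_of_imp fun hM x hx =>
    Finset.mem_Icc.2 ⟨(hM.1 x hx).2.1, (hM.1 x hx).2.2.trans hb⟩

variable [DecidableEq V]

theorem IsTemporalMatching.union (hM : IsTemporalMatching G Δ M) (hN : IsTemporalMatching G Δ N)
    (hMN : ∀ x ∈ M, ∀ y ∈ N, x ≠ y → DeltaIndep Δ x y) : IsTemporalMatching G Δ (M ∪ N) := by
  simp only [IsTemporalMatching, Finset.mem_union]
  refine ⟨fun x hx => hx.elim (hM.1 x) (hN.1 x), ?_⟩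
  rintro x (hx | hx) y (hy | hy) hxy
  · exact hM.2 x hx y hy hxy
  · exact hMN x hx y hy hxy
  · exact (hMN y hy x hx hxy.symm).symm
  · exact hN.2 x hx y hy hxy

theorem IsTemporalMatching.union_of_forall_mem_or_add_le
    (hMM' : IsTemporalMatching G Δ (M ∪ M')) (hN : IsTemporalMatching G Δ N)
    (h : ∀ x ∈ M, ∀ y ∈ N, y ∈ M' ∨ y.2 + Δ ≤ x.2) : IsTemporalMatching G Δ (M ∪ N) := by
  refine (hMM'.subset Finset.subset_union_left).union hN fun x hx y hy hxy => ?_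
  rcases h x hx y hy with hyM' | hfar
  · exact hMM'.2 x (Finset.mem_union_left _ hx) y (Finset.mem_union_right _ hyM') hxy
  · exact deltaIndep_of_add_le hfar

theorem restrict_eq_union_restrict {a b c : ℕ} (hab : a ≤ b + 1) (hbc : b ≤ c) :
    restrict M a c = restrict M (b + 1) c ∪ restrict M a b := by
  ext x
  simp only [restrict, Finset.mem_filter, Finset.mem_union]
  grind

theorem DComplete.nonempty {d : ℕ} {ℱ : Finset (Finset (Sym2 V × ℕ))}
    (h : DComplete G Δ d ℱ) : ℱ.Nonempty :=
  let ⟨M, hM, _⟩ := h ∅ isTemporalMatching_empty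
  ⟨M, hM⟩

end TemporalMatching

section Window

/-- The `d`-th of the consecutive windows of length `Δ` into which the time axis is divided. Windows
are numbered from `1`, as the families `ℳ d` are; window `0` is empty. -/
def timeWindow (Δ d : ℕ) : Finset ℕ :=
  Finset.Icc (Δ * (d - 1) + 1) (Δ * d)

/-- The part `M[Δ(d-1)+1, Δd]` of a set `M` of time edges that lies in the `d`-th window. -/
def windowPart (Δ d : ℕ) (M : Finset (Sym2 V × ℕ)) : Finset (Sym2 V × ℕ) :=
  restrict M (Δ * (d - 1) + 1) (Δ * d)

/-- The exchange step `(M \ M[Δ(d-1)+1, Δd]) ∪ M'` in the definition of `d`-completeness. -/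
def replaceWindow [DecidableEq V] (Δ d : ℕ) (M M' : Finset (Sym2 V × ℕ)) :
    Finset (Sym2 V × ℕ) :=
  (M \ windowPart Δ d M) ∪ M'

variable {Δ d e L t : ℕ} {M M' : Finset (Sym2 V × ℕ)} {x : Sym2 V × ℕ}

theorem eq_of_mem_timeWindow (hd : t ∈ timeWindow Δ d) (he : t ∈ timeWindow Δ e) : d = e := by
  simp only [timeWindow, Finset.mem_Icc] at hd he
  rcases lt_trichotomy d e with hlt | heq | hgt
  · have : Δ * d ≤ Δ * (e - 1) := Nat.mul_le_mul_left Δ (Nat.le_sub_one_of_lt hlt)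
    omega
  · exact heq
  · have : Δ * e ≤ Δ * (d - 1) := Nat.mul_le_mul_left Δ (Nat.le_sub_one_of_lt hgt)
    omega

theorem timeWindow_subset_Icc (h : d ≤ L) : timeWindow Δ d ⊆ Finset.Icc 1 (Δ * L) :=
  Finset.Icc_subset_Icc (Nat.le_add_left 1 _) (Nat.mul_le_mul_left Δ h)

theorem lt_of_mem_timeWindow_succ (h : t ∈ timeWindow Δ (d + 1)) : Δ * d < t :=
  (Finset.mem_Icc.1 h).1

theorem le_of_mem_timeWindow (h : t ∈ timeWindow Δ d) : t ≤ Δ * d :=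
  (Finset.mem_Icc.1 h).2

theorem mem_windowPart : x ∈ windowPart Δ d M ↔ x ∈ M ∧ x.2 ∈ timeWindow Δ d := by
  simp only [windowPart, restrict, timeWindow, Finset.mem_filter, Finset.mem_Icc]

theorem windowPart_subset : windowPart Δ d M ⊆ M :=
  Finset.filter_subset _ _

theorem windowPart_one : windowPart Δ 1 M = restrict M 1 (Δ * 1) := by
  simp only [windowPart, Nat.sub_self, Nat.mul_zero, Nat.zero_add]

variable [DecidableEq V]

theorem restrict_one_mul_succ :
    restrict M 1 (Δ * (d + 1)) = windowPart Δ (d + 1) M ∪ restrict M 1 (Δ * d) :=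
  restrict_eq_union_restrict (Nat.le_add_left 1 _) (Nat.mul_le_mul_left Δ d.le_succ)

theorem mem_replaceWindow :
    x ∈ replaceWindow Δ d M M' ↔ x ∈ M ∧ x.2 ∉ timeWindow Δ d ∨ x ∈ M' := by
  simp only [replaceWindow, Finset.mem_union, Finset.mem_sdiff, mem_windowPart]
  tauto

theorem windowPart_replaceWindow_self (hM' : ∀ x ∈ M', x.2 ∈ timeWindow Δ d) :
    windowPart Δ d (replaceWindow Δ d M M') = M' := by
  ext x
  have := hM' x
  simp only [mem_windowPart, mem_replaceWindow]
  tauto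

theorem windowPart_replaceWindow_of_ne (hM' : ∀ x ∈ M', x.2 ∈ timeWindow Δ d) (hed : e ≠ d) :
    windowPart Δ e (replaceWindow Δ d M M') = windowPart Δ e M := by
  ext x
  have mem_window := hM' x
  have windows_disjoint : x.2 ∈ timeWindow Δ e → x.2 ∉ timeWindow Δ d :=
    fun he hd => hed (eq_of_mem_timeWindow he hd)
  simp only [mem_windowPart, mem_replaceWindow]
  tauto

end Window

section Table

variable [DecidableEq V] {G : TemporalGraph V} {Δ L : ℕ} {ℳ : ℕ → Finset (Finset (Sym2 V × ℕ))}
  {M M' N : Finset (Sym2 V × ℕ)}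

theorem exists_isTemporalMatching_forall_windowPart_mem {s : Finset ℕ}
    (hwindow : ∀ i ∈ s, ∀ M ∈ ℳ i, ∀ x ∈ M, x.2 ∈ timeWindow Δ i)
    (hcomp : ∀ i ∈ s, DComplete G Δ i (ℳ i)) (hM : IsTemporalMatching G Δ M) :
    ∃ N, IsTemporalMatching G Δ N ∧ M.card ≤ N.card ∧ (∀ i ∈ s, windowPart Δ i N ∈ ℳ i) ∧
      ∀ x ∈ N, x ∈ M ∨ ∃ i ∈ s, x.2 ∈ timeWindow Δ i := by
  induction s using Finset.induction_on with
  | empty => exact ⟨M, hM, le_rfl, by simp, fun x hx => Or.inl hx⟩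
  | insert d s hd ih =>
    rw [Finset.forall_mem_insert] at hwindow hcomp
    obtain ⟨N, hN, hcard, hparts, horigin⟩ := ih hwindow.2 hcomp.2
    obtain ⟨M', hM', hmatching, hcard'⟩ := hcomp.1 N hN
    have hM'_window := hwindow.1 M' hM'
    refine ⟨replaceWindow Δ d N M', hmatching, hcard.trans hcard', ?_, fun x hx => ?_⟩
    · rw [Finset.forall_mem_insert, windowPart_replaceWindow_self hM'_window]
      refine ⟨hM', fun i hi => ?_⟩
      rw [windowPart_replaceWindow_of_ne hM'_window (ne_of_mem_of_not_mem hi hd)]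
      exact hparts i hi
    · rw [Finset.exists_mem_insert]
      rcases mem_replaceWindow.1 hx with ⟨hxN, -⟩ | hxM'
      · exact (horigin x hxN).imp_right Or.inr
      · exact Or.inr (Or.inl (hM'_window x hxM'))

open Classical in
theorem Ttab_succ {i : ℕ} (hi : 1 ≤ i) :
    Ttab G Δ ℳ (i + 1) M = ((ℳ i).filter fun M' => IsTemporalMatching G Δ (M ∪ M')).sup
      fun M' => M.card + Ttab G Δ ℳ i M' := by
  obtain ⟨i, rfl⟩ := Nat.exists_eq_add_of_le' hi
  rw [Ttab]

theorem card_add_Ttab_le_Ttab_succ {i : ℕ} (hi : 1 ≤ i) (hM' : M' ∈ ℳ i)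
    (h : IsTemporalMatching G Δ (M ∪ M')) :
    M.card + Ttab G Δ ℳ i M' ≤ Ttab G Δ ℳ (i + 1) M := by
  classical
  rw [Ttab_succ hi]
  exact Finset.le_sup (f := fun M' => M.card + Ttab G Δ ℳ i M') (Finset.mem_filter.2 ⟨hM', h⟩)

theorem Ttab_succ_eq_zero_or_exists {i : ℕ} (hi : 1 ≤ i) :
    Ttab G Δ ℳ (i + 1) M = 0 ∨ ∃ M' ∈ ℳ i, IsTemporalMatching G Δ (M ∪ M') ∧
      Ttab G Δ ℳ (i + 1) M = M.card + Ttab G Δ ℳ i M' := by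
  classical
  rw [Ttab_succ hi]
  rcases ((ℳ i).filter fun M' => IsTemporalMatching G Δ (M ∪ M')).eq_empty_or_nonempty
    with hempty | hne
  · exact Or.inl (by rw [hempty, Finset.sup_empty, Nat.bot_eq_zero])
  · obtain ⟨M', hM', hmax⟩ := Finset.exists_mem_eq_sup _ hne fun M' => M.card + Ttab G Δ ℳ i M'
    obtain ⟨hM'mem, hunion⟩ := Finset.mem_filter.1 hM'
    exact Or.inr ⟨M', hM'mem, hunion, hmax⟩

theorem card_restrict_le_Ttab_windowPart (hN : IsTemporalMatching G Δ N)
    (hparts : ∀ i ∈ Finset.Icc 1 L, windowPart Δ i N ∈ ℳ i) {i : ℕ} (hi : 1 ≤ i) (hiL : i ≤ L) :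
    (restrict N 1 (Δ * i)).card ≤ Ttab G Δ ℳ i (windowPart Δ i N) := by
  induction i, hi using Nat.le_induction with
  | base => rw [windowPart_one, Ttab]
  | succ i hi ih =>
    have hunion : IsTemporalMatching G Δ (windowPart Δ (i + 1) N ∪ windowPart Δ i N) :=
      hN.subset (Finset.union_subset windowPart_subset windowPart_subset)
    calc (restrict N 1 (Δ * (i + 1))).card
        ≤ (windowPart Δ (i + 1) N).card + (restrict N 1 (Δ * i)).card := by
          rw [restrict_one_mul_succ]
          exact Finset.card_union_le _ _
      _ ≤ (windowPart Δ (i + 1) N).card + Ttab G Δ ℳ i (windowPart Δ i N) := by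
          gcongr
          exact ih (by omega)
      _ ≤ Ttab G Δ ℳ (i + 1) (windowPart Δ (i + 1) N) :=
          card_add_Ttab_le_Ttab_succ hi (hparts i (Finset.mem_Icc.2 ⟨hi, by omega⟩)) hunion

/- Keeping track of `x ∈ M ∨ x.2 + Δ ≤ Δ * i` is what lets the induction proceed: the only time
edges of `N` that can conflict with a choice for window `i + 1` are those of `M`. -/
theorem exists_isTemporalMatching_Ttab_le_card
    (hmatch : ∀ i ∈ Finset.Icc 1 L, ∀ M ∈ ℳ i,
      IsTemporalMatching (tgSlice G (Δ * (i - 1) + 1) (Δ * i)) Δ M)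
    {i : ℕ} (hi : 1 ≤ i) (hiL : i ≤ L) (hM : M ∈ ℳ i) :
    ∃ N, IsTemporalMatching G Δ N ∧ (∀ x ∈ N, x ∈ M ∨ x.2 + Δ ≤ Δ * i) ∧
      Ttab G Δ ℳ i M ≤ N.card := by
  have hfamily : ∀ j, 1 ≤ j → j ≤ L → ∀ M ∈ ℳ j,
      IsTemporalMatching G Δ M ∧ ∀ x ∈ M, x.2 ∈ timeWindow Δ j := fun j hj hjL M hM =>
    isTemporalMatching_tgSlice_iff.1 (hmatch j (Finset.mem_Icc.2 ⟨hj, hjL⟩) M hM)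
  induction i, hi using Nat.le_induction generalizing M with
  | base => exact ⟨M, (hfamily 1 le_rfl hiL M hM).1, fun x hx => Or.inl hx, by rw [Ttab]⟩
  | succ i hi ih =>
    obtain ⟨hM_matching, hM_window⟩ := hfamily (i + 1) (by omega) hiL M hM
    rcases Ttab_succ_eq_zero_or_exists (G := G) (Δ := Δ) (ℳ := ℳ) (M := M) hi
      with hzero | ⟨M', hM', hunion, hT⟩
    · exact ⟨M, hM_matching, fun x hx => Or.inl hx, hzero.trans_le (Nat.zero_le _)⟩
    obtain ⟨N, hN, horigin, hcard⟩ := ih (by omega) hM'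
    have hM_late : ∀ x ∈ M, Δ * i < x.2 := fun x hx => lt_of_mem_timeWindow_succ (hM_window x hx)
    have hN_early : ∀ y ∈ N, y.2 ≤ Δ * i := fun y hy => (horigin y hy).elim
      (fun hyM' => le_of_mem_timeWindow ((hfamily i hi (by omega) M' hM').2 y hyM'))
      (fun hle => le_of_add_le_left hle)
    have hdisjoint : Disjoint M N := Finset.disjoint_left.2 fun x hxM hxN =>
      (hM_late x hxM).not_ge (hN_early x hxN)
    refine ⟨M ∪ N, hunion.union_of_forall_mem_or_add_le hN fun x hx y hy =>
      (horigin y hy).imp_right fun hle => hle.trans (hM_late x hx).le, fun x hx => ?_, ?_⟩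
    · exact (Finset.mem_union.1 hx).imp_right fun hxN => Nat.add_le_add_right (hN_early x hxN) Δ
    · rw [hT, Finset.card_union_of_disjoint hdisjoint]
      gcongr

end Table

theorem statement11_general [DecidableEq V] {G : TemporalGraph V} {Δ L : ℕ} (hL : 1 ≤ L)
    {ℳ : ℕ → Finset (Finset (Sym2 V × ℕ))}
    (hmatch : ∀ i ∈ Finset.Icc 1 L, ∀ M ∈ ℳ i,
      IsTemporalMatching (tgSlice G (Δ * (i - 1) + 1) (Δ * i)) Δ M)
    (hcomp : ∀ i ∈ Finset.Icc 1 L, DComplete G Δ i (ℳ i)) (k : ℕ) :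
    (∃ M, IsTemporalMatching (tgSlice G 1 (Δ * L)) Δ M ∧ k ≤ M.card) ↔
      k ≤ (ℳ L).sup fun M => Ttab G Δ ℳ L M := by
  have hL_mem : L ∈ Finset.Icc 1 L := Finset.mem_Icc.2 ⟨hL, le_rfl⟩
  have hwindow : ∀ i ∈ Finset.Icc 1 L, ∀ M ∈ ℳ i, ∀ x ∈ M, x.2 ∈ timeWindow Δ i :=
    fun i hi M hM => (isTemporalMatching_tgSlice_iff.1 (hmatch i hi M hM)).2
  constructor
  · rintro ⟨M, hM, hk⟩
    obtain ⟨hM, hM_times⟩ := isTemporalMatching_tgSlice_iff.1 hM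
    obtain ⟨N, hN, hcard, hparts, horigin⟩ :=
      exists_isTemporalMatching_forall_windowPart_mem hwindow hcomp hM
    have hN_times : ∀ x ∈ N, x.2 ∈ Finset.Icc 1 (Δ * L) := fun x hx =>
      (horigin x hx).elim (hM_times x) fun ⟨_, hi, hxi⟩ =>
        timeWindow_subset_Icc (Finset.mem_Icc.1 hi).2 hxi
    calc k ≤ N.card := hk.trans hcard
      _ = (restrict N 1 (Δ * L)).card := by
          rw [restrict, Finset.filter_true_of_mem fun x hx => Finset.mem_Icc.1 (hN_times x hx)]
      _ ≤ Ttab G Δ ℳ L (windowPart Δ L N) :=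
          card_restrict_le_Ttab_windowPart hN hparts hL le_rfl
      _ ≤ (ℳ L).sup fun M => Ttab G Δ ℳ L M :=
          Finset.le_sup (f := fun M => Ttab G Δ ℳ L M) (hparts L hL_mem)
  · intro hk
    obtain ⟨M, hM, hmax⟩ :=
      Finset.exists_mem_eq_sup _ (hcomp L hL_mem).nonempty fun M => Ttab G Δ ℳ L M
    obtain ⟨N, hN, horigin, hcard⟩ := exists_isTemporalMatching_Ttab_le_card hmatch hL le_rfl hM
    have hN_times : ∀ x ∈ N, x.2 ∈ Finset.Icc 1 (Δ * L) := fun x hx =>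
      Finset.mem_Icc.2 ⟨(hN.1 x hx).2.1, (horigin x hx).elim
        (fun hxM => le_of_mem_timeWindow (hwindow L hL_mem M hM x hxM)) le_of_add_le_left⟩
    exact ⟨N, isTemporalMatching_tgSlice_iff.2 ⟨hN, hN_times⟩, (hk.trans_eq hmax).trans hcard⟩

/-- Let `tau = L·Δ` and for each `i ∈ [L]` let `ℳ i` be a
family of `Δ`-temporal matchings of `G[Δ(i-1)+1, Δi]` which is `i`-complete for
`G`. Then for every `k`, `G` has a `Δ`-temporal matching of size at least `k`
iff `max_{M ∈ ℳ L} T_L[M] ≥ k`. -/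
theorem statement11 {V : Type*} [DecidableEq V] (Δ L : ℕ) (hΔ : 1 ≤ Δ) (hL : 1 ≤ L)
    (G : TemporalGraph V) (htau : G.tau = L * Δ)
    (ℳ : ℕ → Finset (Finset (Sym2 V × ℕ)))
    (hmatch : ∀ i ∈ Finset.Icc 1 L, ∀ M ∈ ℳ i,
      IsTemporalMatching (tgSlice G (Δ * (i - 1) + 1) (Δ * i)) Δ M)
    (hcomp : ∀ i ∈ Finset.Icc 1 L, DComplete G Δ i (ℳ i)) :
    ∀ k : ℕ,
      (∃ M : Finset (Sym2 V × ℕ), IsTemporalMatching G Δ M ∧ k ≤ M.card) ↔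
        k ≤ (ℳ L).sup (fun M => Ttab G Δ ℳ L M) := by
  simpa only [isTemporalMatching_tgSlice_one_of_tau_le (htau.trans_le (Nat.mul_comm L Δ).le)]
    using statement11_general hL hmatch hcomp
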